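/- Almost-sure essential uniqueness of the LMN block-term decomposition (Theorem 1). Let R, L, M, N, I, J, K be positive integers with I ≥ L·R, J ≥ M·R, K ≥ N, and L·M ≥ N ≥ max(⌈L/M⌉ + ⌈M/L⌉, 3). Then for Lebesgue-almost every tuple of factors (A_r ∈ ℝ^{I×L}, B_r ∈ ℝ^{J×M}, C_r ∈ ℝ^{K×N}, D_r ∈ ℝ^{L×M×N}), r = 1,…,R, the tensor Y ∈ ℝ^{I×J×K} with entries Y[i,j,k] = Σ_{r=1}^R Σ_{l,m,n} D_r[l,m,n]·A_r[i,l]·B_r[j,m]·C_r[k,n] has an essentially unique LMN decomposition: for every other tuple (Ā_r ∈ ℝ^{I×L}, B̄_r ∈ ℝ^{J×M}, C̄_r ∈ ℝ^{K×N}, D̄_r ∈ ℝ^{L×M×N}), r = 1,…,R, satisfying Y[i,j,k] = Σ_r Σ_{l,m,n} D̄_r[l,m,n]·Ā_r[i,l]·B̄_r[j,m]·C̄_r[k,n] for all (i,j,k), there exist a permutation π of {1,…,R} and, for each r, invertible matrices Θ_{a,r} ∈ ℝ^{L×L}, Θ_{b,r} ∈ ℝ^{M×M}, Θ_{c,r}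 ∈ ℝ^{N×N} such that Ā_{π(r)} = A_r·Θ_{a,r}, B̄_{π(r)} = B_r·Θ_{b,r}, C̄_{π(r)} = C_r·Θ_{c,r}, and D̄_{π(r)} ×₁ Θ_{a,r} ×₂ Θ_{b,r} ×₃ Θ_{c,r} = D_r. -/

import Mathlib

open MeasureTheory

/-- Lebesgue (volume) measure on a real matrix space: the standard product
Lebesgue measure on the entries (inherited from the Pi type). -/
noncomputable instance matrixMeasureSpace (m n : ℕ) :
    MeasureSpace (Matrix (Fin m) (Fin n) ℝ) :=
  inferInstanceAs (MeasureSpace (Fin m → Fin n → ℝ))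

/-- Tucker (multilinear) product `D ×₁ A ×₂ B ×₃ C` of a third-order tensor
`D ∈ ℝ^{L×M×N}` with matrices `A ∈ ℝ^{I×L}`, `B ∈ ℝ^{J×M}`, `C ∈ ℝ^{K×N}`. -/
def tucker {L M N I J K : ℕ} (D : Fin L → Fin M → Fin N → ℝ)
    (A : Matrix (Fin I) (Fin L) ℝ) (B : Matrix (Fin J) (Fin M) ℝ)
    (C : Matrix (Fin K) (Fin N) ℝ) : Fin I → Fin J → Fin K → ℝ :=
  fun i j k => ∑ l, ∑ m, ∑ n, D l m n * A i l * B j m * C k n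

/-!
Write `Y_k = ∑ r, A r * S r k * (B r)ᵀ` for the frontal slices of `Y`, where `S r k` is the `k`-th
frontal slice of `D r ×₃ C r`; thus `Y_k = A * S_k * Bᵀ` with `A = [A₁ ⋯ A_R]`, `B = [B₁ ⋯ B_R]` and
`S_k` block diagonal. Generically `A` and `B` have full column rank, so a second decomposition is
related to the first by `A' = A * P`, `B' = B * Q` and `S_k = P * S'_k * Qᵀ`. The projection onto a
term of the second decomposition commutes with all `S'_k`; conjugated by `P` and `Qᵀ` it becomes an
endomorphism of the representation `(S_k)ₖ` of the generalized Kronecker quiver. If the only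
endomorphisms of `(S_k)ₖ` are those scaling each diagonal block, then `P` and `Q` are block diagonal
up to a common permutation, and the transformations of the third mode follow from the full rank of
`C r` and of the third unfolding of `D r`.

All these rank and endomorphism conditions hold off the zero set of an analytic function, so each
needs only one witness. For the endomorphism condition with `M ≤ L`, take as slices the successive
column blocks of width `M` of the first `L` rows of an identity matrix, `⌈L / M⌉` in number, and
further slices that contain a diagonal block and a row of ones; disjoint sets of diagonal entries
for different terms rule out homomorphisms between them.
-/

open Matrix
open scoped ContDiff

section Genericity

variable {E : Type*} [NormedAddCommGroup E] [NormedSpace ℝ E] [FiniteDimensional ℝ E]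
  [MeasurableSpace E] [BorelSpace E] (μ : Measure E) [μ.IsAddHaarMeasure]

theorem ae_smul_ne_zero_of_contDiff_omega {F : Type*} [NormedAddCommGroup F] [NormedSpace ℝ F]
    {f : F → ℝ} (hf : ContDiff ℝ ω f) (hf₀ : f 0 ≠ 0) (x : F) : ∀ᵐ t : ℝ, f (t • x) ≠ 0 := by
  have hline : AnalyticOnNhd ℝ (fun t : ℝ => f (t • x)) Set.univ :=
    contDiff_omega_iff_analyticOnNhd.1 (by fun_prop)
  have hcodisc := hline.preimage_zero_mem_codiscrete (x := 0) (by simpa using hf₀)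
  have hae := ae_restrict_le_codiscreteWithin (μ := volume) MeasurableSet.univ hcodisc
  rwa [Measure.restrict_univ] at hae

/-- By Fubini, some dilate of the zero set of `f` is null, since every line through `0` meets
that zero set in a null set. -/
theorem ae_ne_zero_of_contDiff_omega_of_apply_zero_ne_zero {f : E → ℝ} (hf : ContDiff ℝ ω f)
    (hf₀ : f 0 ≠ 0) : ∀ᵐ x ∂μ, f x ≠ 0 := by
  have hmeas : MeasurableSet {p : E × ℝ | f (p.2 • p.1) ≠ 0} :=
    (isOpen_ne.preimage (hf.continuous.comp (by fun_prop :
      Continuous fun p : E × ℝ => p.2 • p.1))).measurableSet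
  have hdilates : ∀ᵐ t : ℝ, ∀ᵐ x ∂μ, f (t • x) ≠ 0 :=
    (Measure.ae_ae_comm hmeas).1 (.of_forall (ae_smul_ne_zero_of_contDiff_omega hf hf₀))
  obtain ⟨t, ht, ht₀⟩ := (hdilates.and (Measure.ae_ne volume 0)).exists
  have hnull : μ ((t • ·) ⁻¹' {x | ¬ f x ≠ 0}) = 0 := ht
  rw [Measure.addHaar_preimage_smul _ ht₀, mul_eq_zero] at hnull
  exact hnull.resolve_left (by simp [ht₀])

theorem ae_ne_zero_of_contDiff_omega {f : E → ℝ} (hf : ContDiff ℝ ω f) {x₀ : E}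
    (hx₀ : f x₀ ≠ 0) : ∀ᵐ x ∂μ, f x ≠ 0 := by
  have htranslate : ∀ᵐ y ∂μ, f (y + x₀) ≠ 0 :=
    ae_ne_zero_of_contDiff_omega_of_apply_zero_ne_zero μ (hf.comp (by fun_prop)) (by simpa)
  simpa using (measurePreserving_add_right μ (-x₀)).quasiMeasurePreserving.ae htranslate

variable {V κ : Type*} [AddCommGroup V] [Module ℝ V] [FiniteDimensional ℝ V] [Finite κ]
  {T : E → V →ₗ[ℝ] κ → ℝ}

/-- If `g` is a left inverse of `T x₀`, then `det (g ∘ T x)` is analytic and equals `1` at `x₀`. -/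
theorem ae_injective_of_contDiff_omega (hT : ∀ v k, ContDiff ℝ ω fun x => T x v k) {x₀ : E}
    (hx₀ : Function.Injective (T x₀)) : ∀ᵐ x ∂μ, Function.Injective (T x) := by
  classical
  have := Fintype.ofFinite κ
  obtain ⟨g, hg⟩ := (T x₀).exists_leftInverse_of_injective (LinearMap.ker_eq_bot.2 hx₀)
  let b := Module.finBasis ℝ V
  have hdet : ContDiff ℝ ω fun x => LinearMap.det (g ∘ₗ T x) := by
    simp only [← LinearMap.det_toMatrix b, LinearMap.toMatrix_comp b (Pi.basisFun ℝ κ) b,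
      Matrix.det_apply, Matrix.mul_apply, LinearMap.toMatrix_apply, Pi.basisFun_repr]
    fun_prop
  filter_upwards [ae_ne_zero_of_contDiff_omega μ hdet (x₀ := x₀) (by simp [hg])] with x hx
  have hunit : IsUnit (g ∘ₗ T x) := (LinearMap.isUnit_iff_isUnit_det _).2 hx.isUnit
  exact .of_comp ((Module.End.isUnit_iff _).1 hunit).injective

theorem ae_ker_le_of_contDiff_omega (hT : ∀ v k, ContDiff ℝ ω fun x => T x v k)
    {U : Submodule ℝ V} (hU : ∀ x, U ≤ LinearMap.ker (T x)) {x₀ : E}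
    (hx₀ : LinearMap.ker (T x₀) ≤ U) : ∀ᵐ x ∂μ, LinearMap.ker (T x) ≤ U := by
  obtain ⟨W, hUW⟩ := U.exists_isCompl
  have hinj : Function.Injective ((T x₀).domRestrict W) :=
    LinearMap.injective_domRestrict_iff.2 (hUW.symm.disjoint.mono_right hx₀)
  filter_upwards [ae_injective_of_contDiff_omega μ
    (T := fun x => (T x).domRestrict W) (fun v k => hT v k) hinj] with x hx
  have hdisj : Disjoint W (LinearMap.ker (T x)) := LinearMap.injective_domRestrict_iff.1 hx
  calc LinearMap.ker (T x) = (U ⊔ W) ⊓ LinearMap.ker (T x) := by rw [hUW.sup_eq_top, top_inf_eq]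
    _ = U ⊔ W ⊓ LinearMap.ker (T x) := sup_inf_assoc_of_le W (hU x)
    _ ≤ U := by rw [hdisj.eq_bot, sup_bot_eq]

end Genericity

section FullRankFactorization

variable {F : Type*} [Field F] {m n p q κ : Type*} [Fintype n] [DecidableEq n]

theorem exists_mul_eq_one_of_mulVec_injective [Fintype m] {A : Matrix m n F}
    (hA : Function.Injective A.mulVec) : ∃ B : Matrix n m F, B * A = 1 := by
  classical
  obtain ⟨g, hg⟩ := (toLin' A).exists_leftInverse_of_injective (LinearMap.ker_eq_bot.2 hA)
  exact ⟨LinearMap.toMatrix' g, by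
    rw [← LinearMap.toMatrix'_toLin' A, ← LinearMap.toMatrix'_comp, hg, LinearMap.toMatrix'_id]⟩

theorem exists_isUnit_of_mul_eq_mul [Finite m] [Finite p] {A A' : Matrix m n F}
    {G G' : Matrix n p F} (hA : Function.Injective A.mulVec) (hG : Function.Injective Gᵀ.mulVec)
    (h : A * G = A' * G') :
    ∃ Θ : Matrix n n F, IsUnit Θ ∧ A' = A * Θ ∧ Θ * G' = G := by
  have := Fintype.ofFinite m
  have := Fintype.ofFinite p
  obtain ⟨P, hPA⟩ := exists_mul_eq_one_of_mulVec_injective hA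
  obtain ⟨Q, hQG⟩ := exists_mul_eq_one_of_mulVec_injective hG
  have hGQ : G * Qᵀ = 1 := by simpa using congrArg transpose hQG
  have hPG : P * A' * G' = G := by
    rw [Matrix.mul_assoc, ← h, ← Matrix.mul_assoc, hPA, Matrix.one_mul]
  have hinv : P * A' * (G' * Qᵀ) = 1 := by rw [← Matrix.mul_assoc, hPG, hGQ]
  refine ⟨P * A', .of_mul_eq_one _ hinv, ?_, hPG⟩
  calc A' = A' * (G' * Qᵀ * (P * A')) := by rw [mul_eq_one_comm.1 hinv, Matrix.mul_one]
    _ = A' * G' * Qᵀ * (P * A') := by simp only [Matrix.mul_assoc]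
    _ = A * (P * A') := by rw [← h, Matrix.mul_assoc A, hGQ, Matrix.mul_one]

theorem exists_isUnit_of_forall_mul_eq_mul [Finite m] [Finite p] [Finite κ] {A A' : Matrix m n F}
    {G G' : κ → Matrix n p F} (hA : Function.Injective A.mulVec)
    (hG : ∀ v, (∀ k, v ᵥ* G k = 0) → v = 0) (h : ∀ k, A * G k = A' * G' k) :
    ∃ Θ : Matrix n n F, IsUnit Θ ∧ A' = A * Θ ∧ ∀ k, Θ * G' k = G k := by
  have := Fintype.ofFinite p
  have := Fintype.ofFinite κ
  let stack (H : κ → Matrix n p F) : Matrix n (κ × p) F := of fun i kj => H kj.1 i kj.2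
  have hstack : Function.Injective (stack G)ᵀ.mulVec := by
    refine (injective_iff_map_eq_zero (mulVecLin (stack G)ᵀ)).2 fun v hv => hG v fun k => ?_
    ext j
    simpa [vecMul, dotProduct, mulVec_transpose, stack] using congrFun hv (k, j)
  obtain ⟨Θ, hΘ, hA', hG'⟩ := exists_isUnit_of_mul_eq_mul (A := A) (A' := A') (G' := stack G')
    hA hstack (by ext i ⟨k, j⟩; exact congrFun₂ (h k) i j)
  exact ⟨Θ, hΘ, hA', fun k => by ext i j; exact congrFun₂ hG' i (k, j)⟩

theorem exists_isUnit_of_mul_mul_transpose_eq [Finite m] [Finite p] [Fintype q] [DecidableEq q]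
    [Finite κ] {A A' : Matrix m n F} {B B' : Matrix p q F} {S S' : κ → Matrix n q F}
    (hA : Function.Injective A.mulVec) (hB : Function.Injective B.mulVec)
    (hSl : ∀ v, (∀ k, v ᵥ* S k = 0) → v = 0) (hSr : ∀ v, (∀ k, S k *ᵥ v = 0) → v = 0)
    (h : ∀ k, A * S k * Bᵀ = A' * S' k * B'ᵀ) :
    ∃ (P : Matrix n n F) (Q : Matrix q q F), IsUnit P ∧ IsUnit Q ∧ A' = A * P ∧ B' = B * Q ∧
      ∀ k, S k = P * S' k * Qᵀ := by
  have hSB (v) (hv : ∀ k, v ᵥ* (S k * Bᵀ) = 0) : v = 0 := hSl v fun k =>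
    hB (by simpa [← vecMul_vecMul, vecMul_transpose] using hv k)
  obtain ⟨P, hP, hA', hPS⟩ := exists_isUnit_of_forall_mul_eq_mul hA hSB
    (G' := fun k => S' k * B'ᵀ) (by simpa only [Matrix.mul_assoc] using h)
  obtain ⟨Q, hQ, hB', hQS⟩ := exists_isUnit_of_forall_mul_eq_mul hB
    (G := fun k => (S k)ᵀ) (G' := fun k => (P * S' k)ᵀ) (A' := B')
    (by simpa only [vecMul_transpose] using hSr)
    fun k => by simpa [Matrix.mul_assoc] using congrArg transpose (hPS k).symm
  exact ⟨P, Q, hP, hQ, hA', hB', fun k => by simpa using congrArg transpose (hQS k).symm⟩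

end FullRankFactorization

section Blocks

variable {F ι m n p q : Type*}

/-- The block row matrix `[A₁ ⋯ A_R]`; a column is indexed by its position inside its block and the
block, in the order used by `Matrix.blockDiagonal`. -/
def concatCols (A : ι → Matrix m n F) : Matrix m (n × ι) F :=
  of fun i p => A p.2 i p.1

variable [CommRing F] [Fintype ι] [Fintype n]

theorem concatCols_mul_blockDiagonal [DecidableEq ι] (A : ι → Matrix m n F) (S : ι → Matrix n q F) :
    concatCols A * blockDiagonal S = concatCols fun r => A r * S r := by
  ext i ⟨j, r⟩
  simp [concatCols, Matrix.mul_apply, Fintype.sum_prod_type, blockDiagonal_apply]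

theorem concatCols_mul_transpose (A : ι → Matrix m n F) (B : ι → Matrix p n F) :
    concatCols A * (concatCols B)ᵀ = ∑ r, A r * (B r)ᵀ := by
  ext i j
  simp [concatCols, Matrix.mul_apply, Fintype.sum_prod_type_right, Matrix.sum_apply]

variable (m) in
/-- The diagonal matrix that scales the `r`-th block of a vector `m × ι → F` by `c r`. -/
abbrev blockScaling [DecidableEq m] [DecidableEq ι] (c : ι → F) : Matrix (m × ι) (m × ι) F :=
  diagonal fun p => c p.2

theorem blockScaling_mul_blockDiagonal [Fintype m] [DecidableEq m] [DecidableEq n] [DecidableEq ι]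
    (c : ι → F) (S : ι → Matrix m n F) :
    blockScaling m c * blockDiagonal S = blockDiagonal S * blockScaling n c := by
  ext ⟨i, s⟩ ⟨j, t⟩
  rw [diagonal_mul, mul_diagonal, mul_comm]
  rcases eq_or_ne s t with rfl | hst
  · rfl
  · simp [blockDiagonal_apply_ne _ _ _ hst]

end Blocks

section BlockPermutation

variable {F ι m n : Type*} [CommRing F] [Fintype ι] [DecidableEq ι] [Fintype m]
  {P : Matrix (m × ι) (m × ι) F} {Θ : ι → Matrix m m F} {π : Equiv.Perm ι}

theorem isUnit_of_submatrix_eq_blockDiagonal [DecidableEq m] (hP : IsUnit P)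
    (hΘ : P.submatrix id (Prod.map id π) = blockDiagonal Θ) (r : ι) : IsUnit (Θ r) := by
  have hunit : IsUnit (blockDiagonal Θ) := by
    rw [← hΘ]
    exact (isUnit_submatrix_equiv (.refl _) ((Equiv.refl m).prodCongr π)).2 hP
  rw [isUnit_iff_isUnit_det, det_blockDiagonal, IsUnit.prod_univ_iff] at hunit
  exact (isUnit_iff_isUnit_det _).2 (hunit r)

theorem eq_mul_of_submatrix_eq_blockDiagonal {A A' : ι → Matrix n m F}
    (hA' : concatCols A' = concatCols A * P)
    (hΘ : P.submatrix id (Prod.map id π) = blockDiagonal Θ) (r : ι) : A' (π r) = A r * Θ r := by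
  have hconcat : concatCols (fun r => A' (π r)) = concatCols fun r => A r * Θ r :=
    calc concatCols (fun r => A' (π r))
        = (concatCols A * P).submatrix id (Prod.map id π) := by rw [← hA']; rfl
      _ = concatCols fun r => A r * Θ r := by rw [← concatCols_mul_blockDiagonal, ← hΘ]; rfl
  ext i j
  exact congrFun₂ hconcat i (j, r)

theorem eq_mul_mul_transpose_of_submatrix_eq_blockDiagonal [Fintype n] {T T' : ι → Matrix m n F}
    {Q : Matrix (n × ι) (n × ι) F} {Ψ : ι → Matrix n n F}
    (hT : blockDiagonal T = P * blockDiagonal T' * Qᵀ)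
    (hΘ : P.submatrix id (Prod.map id π) = blockDiagonal Θ)
    (hΨ : Q.submatrix id (Prod.map id π) = blockDiagonal Ψ) (r : ι) :
    T r = Θ r * T' (π r) * (Ψ r)ᵀ := by
  have hT' : blockDiagonal (fun r => T' (π r)) =
      (blockDiagonal T').submatrix ((Equiv.refl m).prodCongr π) ((Equiv.refl n).prodCongr π) := by
    ext ⟨i, s⟩ ⟨j, t⟩
    simp [blockDiagonal_apply]
  have hblocks : blockDiagonal T = blockDiagonal fun r => Θ r * T' (π r) * (Ψ r)ᵀ := by
    rw [blockDiagonal_mul, blockDiagonal_mul, ← blockDiagonal_transpose, ← hΘ, ← hΨ, hT, hT',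
      transpose_submatrix]
    change _ = P.submatrix id ((Equiv.refl m).prodCongr π) * _ *
      Qᵀ.submatrix ((Equiv.refl n).prodCongr π) id
    simp only [submatrix_mul_equiv, submatrix_id_id]
  exact congrFun (blockDiagonal_injective hblocks) r

end BlockPermutation

section Semibrick

variable {F ι m n κ : Type*} [Field F] [Fintype ι] [DecidableEq ι] [Fintype m] [Fintype n]
  [DecidableEq m] [DecidableEq n]

/-- A tuple of matrices `(S r k)ₖ` of common size is a representation of a generalized Kronecker
quiver, with one arrow for each `k : κ`. The representations `S r` are required to be a semibrick:
the only endomorphisms `(X, Z)` of their direct sum are those scaling each summand. -/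
def IsSemibrick (S : ι → κ → Matrix m n F) : Prop :=
  ∀ (X : Matrix (m × ι) (m × ι) F) (Z : Matrix (n × ι) (n × ι) F),
    (∀ k, X * blockDiagonal (S · k) = blockDiagonal (S · k) * Z) →
      ∃ c : ι → F, X = blockScaling m c ∧ Z = blockScaling n c

variable {S S' : ι → κ → Matrix m n F}

theorem IsSemibrick.of_comp {κ₀ : Type*} (e : κ₀ → κ) (hS : IsSemibrick fun r k => S r (e k)) :
    IsSemibrick S :=
  fun X Z h => hS X Z fun k => h (e k)

theorem IsSemibrick.transpose (hS : IsSemibrick S) : IsSemibrick fun r k => (S r k)ᵀ := by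
  intro X Z h
  obtain ⟨c, hZ, hX⟩ := hS Zᵀ Xᵀ fun k => by
    simpa [← blockDiagonal_transpose] using congrArg Matrix.transpose (h k).symm
  exact ⟨c, by simpa using congrArg Matrix.transpose hX,
    by simpa using congrArg Matrix.transpose hZ⟩

theorem IsSemibrick.eq_zero_of_vecMul_eq_zero [Nonempty n] (hS : IsSemibrick S)
    {v : m × ι → F} (hv : ∀ k, v ᵥ* blockDiagonal (S · k) = 0) : v = 0 := by
  ext p
  obtain ⟨c, hX, hZ⟩ := hS (vecMulVec 1 v) 0 fun k => by rw [vecMulVec_mul, hv k]; simp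
  obtain ⟨j⟩ := ‹Nonempty n›
  have hc : c p.2 = 0 := by simpa using (congrFun₂ hZ (j, p.2) (j, p.2)).symm
  simpa [vecMulVec_apply, hc] using congrFun₂ hX p p

theorem IsSemibrick.eq_zero_of_mulVec_eq_zero [Nonempty m] (hS : IsSemibrick S)
    {v : n × ι → F} (hv : ∀ k, blockDiagonal (S · k) *ᵥ v = 0) : v = 0 :=
  hS.transpose.eq_zero_of_vecMul_eq_zero fun k => by
    simpa [← blockDiagonal_transpose, vecMul_transpose] using hv k

theorem exists_perm_of_mul_blockScaling_eq [Nonempty m] {P : Matrix (m × ι) (m × ι) F}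
    (hP : IsUnit P) {c : ι → ι → F}
    (h : ∀ r, P * blockScaling m (Pi.single r 1) = blockScaling m (c r) * P) :
    ∃ π : Equiv.Perm ι, ∀ r, c r = Pi.single r 1 ∘ π := by
  obtain ⟨i₀⟩ := ‹Nonempty m›
  have hdet : P.det ≠ 0 := ((isUnit_iff_isUnit_det P).1 hP).ne_zero
  have hc {i j t u} (hne : P (i, t) (j, u) ≠ 0) (r : ι) : c r t = (Pi.single r 1 : ι → F) u := by
    have hentry := congrFun₂ (h r) (i, t) (j, u)
    rw [mul_diagonal, diagonal_mul, mul_comm] at hentry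
    exact (mul_right_cancel₀ hne hentry).symm
  have hrow (t : ι) : ∃ j u, P (i₀, t) (j, u) ≠ 0 := by
    by_contra! hzero
    exact hdet (det_eq_zero_of_row_eq_zero (i₀, t) fun p => hzero p.1 p.2)
  choose j ρ hρ using hrow
  have hρ_surj : Function.Surjective ρ := by
    intro u
    obtain ⟨i, t, hne⟩ : ∃ i t, P (i, t) (i₀, u) ≠ 0 := by
      by_contra! hzero
      exact hdet (det_eq_zero_of_column_eq_zero (i₀, u) fun p => hzero p.1 p.2)
    have hsingle : (Pi.single u 1 : ι → F) (ρ t) = 1 := by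
      rw [← hc (hρ t), hc hne, Pi.single_eq_same]
    exact ⟨t, by simpa [Pi.single_apply] using hsingle⟩
  exact ⟨.ofBijective ρ hρ_surj.bijective_of_finite,
    fun r => funext fun t => hc (hρ t) r⟩

theorem submatrix_eq_blockDiagonal_of_mul_blockScaling_eq {P : Matrix (m × ι) (m × ι) F}
    {π : Equiv.Perm ι} (h : ∀ r, P * blockScaling m (Pi.single r 1) =
      blockScaling m (Pi.single r 1 ∘ π) * P) :
    P.submatrix id (Prod.map id π) = blockDiagonal fun r => of fun i j => P (i, r) (j, π r) := by
  ext ⟨i, t⟩ ⟨j, u⟩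
  have hentry := congrFun₂ (h (π u)) (i, t) (j, π u)
  rw [mul_diagonal, diagonal_mul] at hentry
  rcases eq_or_ne t u with rfl | htu
  · simp
  · simpa [blockDiagonal_apply, htu] using hentry

theorem IsSemibrick.exists_perm [Nonempty m] (hS : IsSemibrick S)
    {P : Matrix (m × ι) (m × ι) F} {Q : Matrix (n × ι) (n × ι) F} (hP : IsUnit P) (hQ : IsUnit Q)
    (h : ∀ k, blockDiagonal (S · k) = P * blockDiagonal (S' · k) * Qᵀ) :
    ∃ (π : Equiv.Perm ι) (Θ : ι → Matrix m m F) (Ψ : ι → Matrix n n F),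
      P.submatrix id (Prod.map id π) = blockDiagonal Θ ∧
        Q.submatrix id (Prod.map id π) = blockDiagonal Ψ := by
  have hPdet := (isUnit_iff_isUnit_det P).1 hP
  have hQdet := isUnit_det_transpose Q ((isUnit_iff_isUnit_det Q).1 hQ)
  let e (r : ι) : ι → F := Pi.single r 1
  have hend (r : ι) : ∃ c : ι → F, P * blockScaling m (e r) * P⁻¹ = blockScaling m c ∧
      Qᵀ⁻¹ * blockScaling n (e r) * Qᵀ = blockScaling n c := by
    refine hS _ _ fun k => ?_
    calc P * blockScaling m (e r) * P⁻¹ * blockDiagonal (S · k)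
        = P * (blockScaling m (e r) * blockDiagonal (S' · k)) * Qᵀ := by
          rw [h]
          simp only [Matrix.mul_assoc, nonsing_inv_mul_cancel_left _ _ hPdet]
      _ = blockDiagonal (S · k) * (Qᵀ⁻¹ * blockScaling n (e r) * Qᵀ) := by
          rw [h, blockScaling_mul_blockDiagonal]
          simp only [Matrix.mul_assoc, mul_nonsing_inv_cancel_left _ _ hQdet]
  choose c hcP hcQ using hend
  have hP' (r : ι) : P * blockScaling m (e r) = blockScaling m (c r) * P := by
    rw [← hcP, nonsing_inv_mul_cancel_right _ _ hPdet]
  have hQ' (r : ι) : Q * blockScaling n (e r) = blockScaling n (c r) * Q := by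
    have hQt : blockScaling n (e r) * Qᵀ = Qᵀ * blockScaling n (c r) := by
      rw [← hcQ, Matrix.mul_assoc, mul_nonsing_inv_cancel_left _ _ hQdet]
    simpa [blockScaling] using congrArg Matrix.transpose hQt
  obtain ⟨π, hπ⟩ := exists_perm_of_mul_blockScaling_eq hP hP'
  simp only [hπ] at hP' hQ'
  exact ⟨π, _, _, submatrix_eq_blockDiagonal_of_mul_blockScaling_eq hP',
    submatrix_eq_blockDiagonal_of_mul_blockScaling_eq hQ'⟩

theorem IsSemibrick.exists_perm_of_sum_eq [Nonempty m] [Nonempty n] [Finite κ] {a b : Type*}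
    [Finite a] [Finite b] {A A' : ι → Matrix a m F} {B B' : ι → Matrix b n F} (hS : IsSemibrick S)
    (hA : Function.Injective (concatCols A).mulVec) (hB : Function.Injective (concatCols B).mulVec)
    (h : ∀ k, ∑ r, A r * S r k * (B r)ᵀ = ∑ r, A' r * S' r k * (B' r)ᵀ) :
    ∃ (π : Equiv.Perm ι) (Θ : ι → Matrix m m F) (Ψ : ι → Matrix n n F), ∀ r,
      IsUnit (Θ r) ∧ IsUnit (Ψ r) ∧ A' (π r) = A r * Θ r ∧ B' (π r) = B r * Ψ r ∧
        ∀ k, S r k = Θ r * S' (π r) k * (Ψ r)ᵀ := by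
  obtain ⟨P, Q, hP, hQ, hA', hB', hSS'⟩ := exists_isUnit_of_mul_mul_transpose_eq
    (A' := concatCols A') (B' := concatCols B')
    (S := fun k => blockDiagonal (S · k)) (S' := fun k => blockDiagonal (S' · k)) hA hB
    (fun _ => hS.eq_zero_of_vecMul_eq_zero) (fun _ => hS.eq_zero_of_mulVec_eq_zero)
    (by simpa only [concatCols_mul_blockDiagonal, concatCols_mul_transpose] using h)
  obtain ⟨π, Θ, Ψ, hΘ, hΨ⟩ := hS.exists_perm hP hQ hSS'
  exact ⟨π, Θ, Ψ, fun r => ⟨isUnit_of_submatrix_eq_blockDiagonal hP hΘ r,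
    isUnit_of_submatrix_eq_blockDiagonal hQ hΨ r, eq_mul_of_submatrix_eq_blockDiagonal hA' hΘ r,
    eq_mul_of_submatrix_eq_blockDiagonal hB' hΨ r,
    fun k => eq_mul_mul_transpose_of_submatrix_eq_blockDiagonal (hSS' k) hΘ hΨ r⟩⟩

end Semibrick

section ExplicitSemibrick

variable {F ι m n α β κ : Type*} [Field F]

/-- Slices of an explicit brick, for an index map `f : m → α × n` that arranges the rows into
`n × n` blocks. The slices indexed by `α` are those blocks of a (truncated) identity matrix. In
the slice `b₀`, block `k₀` is `diagonal a` and all other entries are `1`; any further slices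
consist of ones. -/
def brickSlice [DecidableEq n] [DecidableEq α] [DecidableEq β] (f : m → α × n) (k₀ : α) (b₀ : β)
    (a : n → F) : α ⊕ β → Matrix m n F
  | .inl k => of fun i j => if f i = (k, j) then 1 else 0
  | .inr b => of fun i j =>
      if b = b₀ ∧ (f i).1 = k₀ then (if (f i).2 = j then a j else 0) else 1

variable [Fintype m] [Fintype n]

theorem isSemibrick_of_orthogonal_bricks [Fintype ι] [DecidableEq ι] [DecidableEq m]
    [DecidableEq n] {S : ι → κ → Matrix m n F}
    (hhom : ∀ s t, s ≠ t → ∀ (X : Matrix m m F) (Z : Matrix n n F),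
      (∀ k, X * S t k = S s k * Z) → X = 0 ∧ Z = 0)
    (hend : ∀ s (X : Matrix m m F) (Z : Matrix n n F),
      (∀ k, X * S s k = S s k * Z) → ∃ c : F, X = c • 1 ∧ Z = c • 1) : IsSemibrick S := by
  intro X Z h
  let X' (s t : ι) : Matrix m m F := X.submatrix (·, s) (·, t)
  let Z' (s t : ι) : Matrix n n F := Z.submatrix (·, s) (·, t)
  have hblock (s t : ι) (k : κ) : X' s t * S t k = S s k * Z' s t := by
    ext i j
    simpa [X', Z', Matrix.mul_apply, Fintype.sum_prod_type, blockDiagonal_apply, ite_mul] using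
      congrFun₂ (h k) (i, s) (j, t)
  choose c hcX hcZ using fun s => hend s _ _ (hblock s s)
  refine ⟨c, ?_, ?_⟩
  · ext ⟨i, s⟩ ⟨j, t⟩
    rcases eq_or_ne s t with rfl | hst
    · simpa [X', Matrix.one_apply, diagonal_apply] using congrFun₂ (hcX s) i j
    · simpa [X', hst, diagonal_apply] using congrFun₂ (hhom s t hst _ _ (hblock s t)).1 i j
  · ext ⟨i, s⟩ ⟨j, t⟩
    rcases eq_or_ne s t with rfl | hst
    · simpa [Z', Matrix.one_apply, diagonal_apply] using congrFun₂ (hcZ s) i j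
    · simpa [Z', hst, diagonal_apply] using congrFun₂ (hhom s t hst _ _ (hblock s t)).2 i j

variable [DecidableEq n] [DecidableEq α] [DecidableEq β]
  {f : m → α × n} {k₀ : α} {b₀ : β} {a b : n → F} {X : Matrix m m F} {Z : Matrix n n F}

theorem apply_of_mul_brickSlice_eq (hf : Function.Injective f)
    (h : ∀ k, X * brickSlice f k₀ b₀ a k = brickSlice f k₀ b₀ b k * Z) (i i' : m) :
    X i i' = if (f i).1 = (f i').1 then Z (f i).2 (f i').2 else 0 := by
  classical
  have hentry := congrFun₂ (h (.inl (f i').1)) i (f i').2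
  simpa [brickSlice, Matrix.mul_apply, hf.eq_iff, Prod.ext_iff (x := f i), ite_and] using hentry

theorem mul_eq_mul_of_mul_brickSlice_eq (hf : Function.Injective f) {e : n → m}
    (he : ∀ j, f (e j) = (k₀, j))
    (h : ∀ k, X * brickSlice f k₀ b₀ a k = brickSlice f k₀ b₀ b k * Z) (i j : n) :
    Z i j * a j = b i * Z i j := by
  have hentry := congrFun₂ (h (.inr b₀)) (e i) j
  rw [Matrix.mul_apply, Matrix.mul_apply, Finset.sum_eq_single (e j)] at hentry
  · simpa [brickSlice, he, apply_of_mul_brickSlice_eq hf h] using hentry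
  · intro i' _ hi'
    rw [apply_of_mul_brickSlice_eq hf h, he]
    split_ifs with hk
    · have hj : (f i').2 ≠ j := by
        intro hj
        have hfi' : f i' = (k₀, j) := Prod.ext hk.symm hj
        exact hi' (hf (hfi'.trans (he j).symm))
      simp [brickSlice, ← hk, hj]
    · rw [zero_mul]
  · simp

theorem eq_zero_of_mul_brickSlice_eq (hf : Function.Injective f) {e : n → m}
    (he : ∀ j, f (e j) = (k₀, j)) (hab : ∀ i j, a j ≠ b i)
    (h : ∀ k, X * brickSlice f k₀ b₀ a k = brickSlice f k₀ b₀ b k * Z) : X = 0 ∧ Z = 0 := by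
  have hZ : Z = 0 := by
    ext i j
    have hpencil := mul_eq_mul_of_mul_brickSlice_eq hf he h i j
    rw [mul_comm, mul_eq_mul_right_iff] at hpencil
    exact hpencil.resolve_left (hab i j)
  refine ⟨?_, hZ⟩
  ext i i'
  simp [apply_of_mul_brickSlice_eq hf h, hZ]

/-- Row `u` of slice `b` consists of ones, which forces the endomorphism to be scalar once it is
known to be diagonal. -/
theorem exists_eq_smul_one_of_mul_brickSlice_eq [DecidableEq m] (hf : Function.Injective f)
    {e : n → m} (he : ∀ j, f (e j) = (k₀, j)) (ha : Function.Injective a) {u : m} {b : β}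
    (hu : ¬(b = b₀ ∧ (f u).1 = k₀))
    (h : ∀ k, X * brickSlice f k₀ b₀ a k = brickSlice f k₀ b₀ a k * Z) :
    ∃ c : F, X = c • 1 ∧ Z = c • 1 := by
  have hX := apply_of_mul_brickSlice_eq hf h
  have hZ_ne {i j : n} (hij : i ≠ j) : Z i j = 0 := by
    have hpencil := mul_eq_mul_of_mul_brickSlice_eq hf he h i j
    rw [mul_comm, mul_eq_mul_right_iff] at hpencil
    exact hpencil.resolve_left fun haij => hij (ha haij).symm
  have hX_ne {i i' : m} (hii' : i ≠ i') : X i i' = 0 := by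
    rw [hX]
    split_ifs with hk
    · exact hZ_ne fun hj => hii' (hf (Prod.ext hk hj))
    · rfl
  have hZ_eq (j : n) : Z j j = X u u := by
    have hentry := congrFun₂ (h (.inr b)) u j
    rw [Matrix.mul_apply, Matrix.mul_apply,
      Finset.sum_eq_single u (fun i _ hi => by rw [hX_ne hi.symm, zero_mul]) (by simp),
      Finset.sum_eq_single j (fun i _ hi => by rw [hZ_ne hi, mul_zero]) (by simp)] at hentry
    simpa [brickSlice, hu] using hentry.symm
  refine ⟨X u u, ?_, ?_⟩
  · ext i i'
    rcases eq_or_ne i i' with rfl | hii'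
    · simp [hX i, hZ_eq]
    · simp [hX_ne hii', hii']
  · ext i j
    rcases eq_or_ne i j with rfl | hij
    · simp [hZ_eq]
    · simp [hZ_ne hij, hij]

theorem isSemibrick_brickSlice [Fintype ι] [DecidableEq ι] [DecidableEq m]
    (hf : Function.Injective f) {e : n → m} (he : ∀ j, f (e j) = (k₀, j)) {a : ι × n → F}
    (ha : Function.Injective a) {u : m} {b : β} (hu : ¬(b = b₀ ∧ (f u).1 = k₀)) :
    IsSemibrick fun r => brickSlice f k₀ b₀ fun j => a (r, j) :=
  isSemibrick_of_orthogonal_bricks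
    (fun _ _ hst _ _ h => eq_zero_of_mul_brickSlice_eq hf he
      (fun _ _ haij => hst (congrArg Prod.fst (ha haij)).symm) h)
    fun _ _ _ h => exists_eq_smul_one_of_mul_brickSlice_eq hf he
      (fun _ _ haij => congrArg Prod.snd (ha haij)) hu h

end ExplicitSemibrick

section Existence

variable (F ι : Type*) [Field F] [Infinite F] [Fintype ι] [DecidableEq ι] {L M N : ℕ}

theorem exists_isSemibrick_of_le {q : ℕ} (hM : 0 < M) (hML : M ≤ L) (hLq : L ≤ q * M)
    (hqN : q < N) (hqN' : L = M → q + 1 < N) :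
    ∃ S : ι → Fin N → Matrix (Fin L) (Fin M) F, IsSemibrick S := by
  obtain ⟨p, rfl⟩ : ∃ p, N = q + (p + 1) := ⟨N - q - 1, by omega⟩
  have hq : 0 < q := Nat.pos_of_ne_zero (by rintro rfl; omega)
  let f (i : Fin L) : Fin q × Fin M := finProdFinEquiv.symm (Fin.castLE hLq i)
  have hf : Function.Injective f := finProdFinEquiv.symm.injective.comp (Fin.castLE_injective hLq)
  have he (j : Fin M) : f (Fin.castLE hML j) = (⟨0, hq⟩, j) :=
    (Equiv.symm_apply_eq _).2 (Fin.ext (by simp))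
  obtain ⟨u, b, hu⟩ : ∃ (u : Fin L) (b : Fin (p + 1)), ¬(b = 0 ∧ (f u).1 = ⟨0, hq⟩) := by
    rcases hML.eq_or_lt with rfl | hlt
    · exact ⟨⟨0, hM⟩, ⟨1, by have := hqN' rfl; omega⟩, by simp [Fin.ext_iff]⟩
    · exact ⟨⟨M, hlt⟩, 0, by simp [f, Fin.ext_iff, hM.ne']⟩
  let a : ι × Fin M ↪ F := (Fintype.equivFin _).toEmbedding.trans
    (Fin.valEmbedding.trans (Infinite.natEmbedding F))
  exact ⟨fun r k => brickSlice f ⟨0, hq⟩ 0 (fun j => a (r, j)) (finSumFinEquiv.symm k),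
    .of_comp finSumFinEquiv (by simpa using isSemibrick_brickSlice hf he a.injective hu)⟩

theorem exists_isSemibrick (hL : 0 < L) (hM : 0 < M)
    (hN : max (⌈(L : ℚ) / M⌉₊ + ⌈(M : ℚ) / L⌉₊) 3 ≤ N) :
    ∃ S : ι → Fin N → Matrix (Fin L) (Fin M) F, IsSemibrick S := by
  obtain ⟨hsum, hN3⟩ := max_le_iff.1 hN
  have hceil_pos {a b : ℕ} (ha : 0 < a) (hb : 0 < b) : 0 < ⌈(a : ℚ) / b⌉₊ :=
    Nat.ceil_pos.2 (by positivity)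
  have hle_ceil_mul {a b : ℕ} (hb : 0 < b) : a ≤ ⌈(a : ℚ) / b⌉₊ * b := by
    have hdiv := Nat.le_ceil ((a : ℚ) / b)
    rw [div_le_iff₀ (by positivity)] at hdiv
    exact_mod_cast hdiv
  have hLM_pos := hceil_pos hL hM
  have hML_pos := hceil_pos hM hL
  rcases le_or_gt M L with hML | hLM
  · refine exists_isSemibrick_of_le F ι hM hML (hle_ceil_mul hM) (by omega) ?_
    rintro rfl
    rw [div_self (by positivity), Nat.ceil_one]
    omega
  · obtain ⟨S, hS⟩ := exists_isSemibrick_of_le (N := N) F ι hL hLM.le (hle_ceil_mul hL) (by omega)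
      fun h => absurd h hLM.ne'
    exact ⟨_, hS.transpose⟩

end Existence

section Endomorphisms

variable {F : Type*} [Field F] {ι m n κ : Type*} [DecidableEq ι]

/-- The linear map whose kernel is the endomorphism space of the direct sum of the representations
`S r`. -/
def endomorphismDefect [Fintype ι] [Fintype m] [Fintype n] (S : ι → κ → Matrix m n F) :
    Matrix (m × ι) (m × ι) F × Matrix (n × ι) (n × ι) F →ₗ[F] κ × (m × ι) × (n × ι) → F where
  toFun XZ := fun t =>
    (XZ.1 * blockDiagonal (S · t.1) - blockDiagonal (S · t.1) * XZ.2) t.2.1 t.2.2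
  map_add' XZ YW := by
    ext t
    simp [Matrix.add_mul, Matrix.mul_add, add_sub_add_comm]
  map_smul' c XZ := by
    ext t
    simp [mul_sub]

theorem mem_ker_endomorphismDefect [Fintype ι] [Fintype m] [Fintype n] {S : ι → κ → Matrix m n F}
    {XZ : Matrix (m × ι) (m × ι) F × Matrix (n × ι) (n × ι) F} :
    XZ ∈ LinearMap.ker (endomorphismDefect S) ↔
      ∀ k, XZ.1 * blockDiagonal (S · k) = blockDiagonal (S · k) * XZ.2 := by
  simp [endomorphismDefect, funext_iff, ← Matrix.ext_iff, sub_eq_zero]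

variable [DecidableEq m] [DecidableEq n]

variable (F ι m n) in
/-- The endomorphisms of a direct sum of representations that scale each summand. -/
def summandScalings : Submodule F (Matrix (m × ι) (m × ι) F × Matrix (n × ι) (n × ι) F) :=
  LinearMap.range ((diagonalLinearMap (m × ι) F F ∘ₗ LinearMap.funLeft F F Prod.snd).prod
    (diagonalLinearMap (n × ι) F F ∘ₗ LinearMap.funLeft F F Prod.snd))

theorem mem_summandScalings {XZ : Matrix (m × ι) (m × ι) F × Matrix (n × ι) (n × ι) F} :
    XZ ∈ summandScalings F ι m n ↔
      ∃ c : ι → F, XZ.1 = blockScaling m c ∧ XZ.2 = blockScaling n c := by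
  simp [summandScalings, Prod.ext_iff, Function.comp_def, LinearMap.funLeft, eq_comm]

variable [Fintype ι] [Fintype m] [Fintype n] {S : ι → κ → Matrix m n F}

theorem isSemibrick_iff_ker_endomorphismDefect_le :
    IsSemibrick S ↔ LinearMap.ker (endomorphismDefect S) ≤ summandScalings F ι m n := by
  simp only [IsSemibrick, SetLike.le_def, mem_ker_endomorphismDefect, mem_summandScalings,
    Prod.forall]

theorem summandScalings_le_ker_endomorphismDefect :
    summandScalings F ι m n ≤ LinearMap.ker (endomorphismDefect S) := by
  intro XZ hXZ
  obtain ⟨c, hX, hZ⟩ := mem_summandScalings.1 hXZ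
  exact mem_ker_endomorphismDefect.2 fun k => by rw [hX, hZ, blockScaling_mul_blockDiagonal]

end Endomorphisms

section GenericMatrices

variable {E : Type*} [NormedAddCommGroup E] [NormedSpace ℝ E] [FiniteDimensional ℝ E]
  [MeasurableSpace E] [BorelSpace E] (μ : Measure E) [μ.IsAddHaarMeasure]
  {ι m n κ : Type*} [Fintype n]

theorem ae_mulVec_injective_of_contDiff_omega [Finite m] {A : E → Matrix m n ℝ}
    (hA : ∀ i j, ContDiff ℝ ω fun x => A x i j) {x₀ : E}
    (hx₀ : Function.Injective (A x₀).mulVec) : ∀ᵐ x ∂μ, Function.Injective (A x).mulVec :=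
  ae_injective_of_contDiff_omega μ (T := fun x => (A x).mulVecLin)
    (fun v i => by simp only [mulVecLin_apply, mulVec, dotProduct]; fun_prop) hx₀

theorem ae_isSemibrick_of_contDiff_omega [Fintype ι] [DecidableEq ι] [Fintype m] [DecidableEq m]
    [DecidableEq n] [Finite κ] {S : E → ι → κ → Matrix m n ℝ}
    (hS : ∀ r k i j, ContDiff ℝ ω fun x => S x r k i j) {x₀ : E} (hx₀ : IsSemibrick (S x₀)) :
    ∀ᵐ x ∂μ, IsSemibrick (S x) := by
  have hblock (k p q) : ContDiff ℝ ω fun x => blockDiagonal (S x · k) p q := by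
    simp only [blockDiagonal_apply]
    split_ifs <;> fun_prop
  have hdefect (XZ t) : ContDiff ℝ ω fun x => endomorphismDefect (S x) XZ t := by
    simp only [endomorphismDefect, LinearMap.coe_mk, AddHom.coe_mk, Matrix.sub_apply,
      Matrix.mul_apply]
    fun_prop
  simp only [isSemibrick_iff_ker_endomorphismDefect_le] at hx₀ ⊢
  exact ae_ker_le_of_contDiff_omega μ hdefect
    (fun _ => summandScalings_le_ker_endomorphismDefect) hx₀

theorem mulVec_injective_one_submatrix {R : Type*} [Semiring R] [DecidableEq m] {g : n → m}
    (hg : Function.Injective g) :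
    Function.Injective ((1 : Matrix m m R).submatrix id g).mulVec := by
  classical
  intro v w hvw
  ext j
  simpa [mulVec, dotProduct, Matrix.one_apply, hg.eq_iff] using congrFun hvw (g j)

end GenericMatrices

section Tucker

variable {L M N I J K : ℕ}

/-- The frontal slices of the tensor `D ×₃ C`, as matrices. -/
def slice (D : Fin L → Fin M → Fin N → ℝ) (C : Matrix (Fin K) (Fin N) ℝ) (k : Fin K) :
    Matrix (Fin L) (Fin M) ℝ :=
  of fun l m => ∑ n, D l m n * C k n

/-- The mode-3 unfolding of a third-order tensor. -/
def unfold₃ (D : Fin L → Fin M → Fin N → ℝ) : Matrix (Fin N) (Fin L × Fin M) ℝ :=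
  of fun n p => D p.1 p.2 n

theorem tucker_eq_mul_slice_mul_transpose (D : Fin L → Fin M → Fin N → ℝ)
    (A : Matrix (Fin I) (Fin L) ℝ) (B : Matrix (Fin J) (Fin M) ℝ) (C : Matrix (Fin K) (Fin N) ℝ)
    (i : Fin I) (j : Fin J) (k : Fin K) : tucker D A B C i j k = (A * slice D C k * Bᵀ) i j := by
  simp only [tucker, slice, Matrix.mul_apply, of_apply, transpose_apply, Finset.mul_sum,
    Finset.sum_mul]
  rw [Finset.sum_comm]
  refine Finset.sum_congr rfl fun m _ => Finset.sum_congr rfl fun l _ =>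
    Finset.sum_congr rfl fun n _ => ?_
  ring

theorem slice_eq_mul_unfold₃ (D : Fin L → Fin M → Fin N → ℝ) (C : Matrix (Fin K) (Fin N) ℝ)
    (k : Fin K) (l : Fin L) (m : Fin M) : slice D C k l m = (C * unfold₃ D) k (l, m) := by
  simp [slice, unfold₃, Matrix.mul_apply, mul_comm]

theorem unfold₃_tucker (D : Fin L → Fin M → Fin N → ℝ)
    (A : Matrix (Fin I) (Fin L) ℝ) (B : Matrix (Fin J) (Fin M) ℝ) (C : Matrix (Fin K) (Fin N) ℝ) :
    unfold₃ (tucker D A B C) = C * unfold₃ (tucker D A B (1 : Matrix (Fin N) (Fin N) ℝ)) := by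
  ext k ⟨i, j⟩
  simp only [Matrix.mul_apply, unfold₃, tucker, of_apply, Matrix.one_apply, mul_ite, mul_one,
    mul_zero, Finset.sum_ite_eq, Finset.mem_univ, if_true, Finset.mul_sum]
  simp_rw [Finset.sum_comm (s := Finset.univ (α := Fin N))]
  refine Finset.sum_congr rfl fun l _ => Finset.sum_congr rfl fun m _ =>
    Finset.sum_congr rfl fun n _ => ?_
  ring

theorem unfold₃_injective :
    Function.Injective (unfold₃ : (Fin L → Fin M → Fin N → ℝ) → _) := by
  intro D D' h
  ext l m n
  exact congrFun₂ h n (l, m)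

theorem exists_isUnit_of_slice_eq {D D' : Fin L → Fin M → Fin N → ℝ}
    {C C' : Matrix (Fin K) (Fin N) ℝ} {Θ : Matrix (Fin L) (Fin L) ℝ} {Ψ : Matrix (Fin M) (Fin M) ℝ}
    (hC : Function.Injective C.mulVec) (hD : Function.Injective (unfold₃ D)ᵀ.mulVec)
    (h : ∀ k, slice D C k = Θ * slice D' C' k * Ψᵀ) :
    ∃ Φ : Matrix (Fin N) (Fin N) ℝ, IsUnit Φ ∧ C' = C * Φ ∧ tucker D' Θ Ψ Φ = D := by
  have hunfold : C * unfold₃ D = C' * unfold₃ (tucker D' Θ Ψ (1 : Matrix (Fin N) (Fin N) ℝ)) := by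
    ext k ⟨l, m⟩
    rw [← slice_eq_mul_unfold₃, h, ← tucker_eq_mul_slice_mul_transpose, ← unfold₃_tucker]
    rfl
  obtain ⟨Φ, hΦ, hC', hD'⟩ := exists_isUnit_of_mul_eq_mul hC hD hunfold
  exact ⟨Φ, hΦ, hC', unfold₃_injective (by rw [unfold₃_tucker, hD'])⟩

/-- The conditions on the factors of an LMN decomposition under which it is essentially unique. -/
structure IsGeneric {ι : Type*} [Fintype ι] [DecidableEq ι] (A : ι → Matrix (Fin I) (Fin L) ℝ)
    (B : ι → Matrix (Fin J) (Fin M) ℝ) (C : ι → Matrix (Fin K) (Fin N) ℝ)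
    (D : ι → Fin L → Fin M → Fin N → ℝ) : Prop where
  concatCols_left : Function.Injective (concatCols A).mulVec
  concatCols_right : Function.Injective (concatCols B).mulVec
  factor₃ (r : ι) : Function.Injective (C r).mulVec
  unfold₃_transpose (r : ι) : Function.Injective (unfold₃ (D r))ᵀ.mulVec
  isSemibrick : IsSemibrick fun r => slice (D r) (C r)

theorem IsGeneric.exists_perm {ι : Type*} [Fintype ι] [DecidableEq ι] [Nonempty (Fin L)]
    [Nonempty (Fin M)] {A A' : ι → Matrix (Fin I) (Fin L) ℝ} {B B' : ι → Matrix (Fin J) (Fin M) ℝ}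
    {C C' : ι → Matrix (Fin K) (Fin N) ℝ} {D D' : ι → Fin L → Fin M → Fin N → ℝ}
    (hgen : IsGeneric A B C D)
    (h : ∀ i j k, ∑ r, tucker (D r) (A r) (B r) (C r) i j k =
      ∑ r, tucker (D' r) (A' r) (B' r) (C' r) i j k) :
    ∃ π : Equiv.Perm ι, ∀ r, ∃ (Θ : Matrix (Fin L) (Fin L) ℝ) (Ψ : Matrix (Fin M) (Fin M) ℝ)
      (Φ : Matrix (Fin N) (Fin N) ℝ), IsUnit Θ ∧ IsUnit Ψ ∧ IsUnit Φ ∧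
        A' (π r) = A r * Θ ∧ B' (π r) = B r * Ψ ∧ C' (π r) = C r * Φ ∧
          tucker (D' (π r)) Θ Ψ Φ = D r := by
  obtain ⟨π, Θ, Ψ, hπ⟩ := hgen.isSemibrick.exists_perm_of_sum_eq
    (S' := fun r => slice (D' r) (C' r)) (A' := A') (B' := B')
    hgen.concatCols_left hgen.concatCols_right fun k => by
      ext i j
      simpa only [Matrix.sum_apply, ← tucker_eq_mul_slice_mul_transpose] using h i j k
  refine ⟨π, fun r => ?_⟩
  obtain ⟨hΘ, hΨ, hA', hB', hslice⟩ := hπ r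
  obtain ⟨Φ, hΦ, hC', hD'⟩ :=
    exists_isUnit_of_slice_eq (hgen.factor₃ r) (hgen.unfold₃_transpose r) hslice
  exact ⟨Θ r, Ψ r, Φ, hΘ, hΨ, hΦ, hA', hB', hC', hD'⟩

end Tucker

section Witnesses

variable {R L M N I J K : ℕ}

theorem exists_concatCols_mulVec_injective (h : L * R ≤ I) :
    ∃ A : Fin R → Matrix (Fin I) (Fin L) ℝ, Function.Injective (concatCols A).mulVec :=
  ⟨fun r => (1 : Matrix (Fin I) (Fin I) ℝ).submatrix id fun l =>
      Fin.castLE h (finProdFinEquiv (l, r)),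
    mulVec_injective_one_submatrix ((Fin.castLE_injective h).comp finProdFinEquiv.injective)⟩

theorem exists_unfold₃_transpose_mulVec_injective (h : N ≤ L * M) :
    ∃ D : Fin L → Fin M → Fin N → ℝ, Function.Injective (unfold₃ D)ᵀ.mulVec :=
  ⟨fun l m n => (1 : Matrix _ _ ℝ).submatrix id (fun n => finProdFinEquiv.symm (Fin.castLE h n))
      (l, m) n,
    mulVec_injective_one_submatrix (finProdFinEquiv.symm.injective.comp (Fin.castLE_injective h))⟩

theorem exists_isSemibrick_slice {ι : Type*} [Fintype ι] [DecidableEq ι] (hL : 0 < L) (hM : 0 < M)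
    (hN : max (⌈(L : ℚ) / M⌉₊ + ⌈(M : ℚ) / L⌉₊) 3 ≤ N) (hK : N ≤ K) :
    ∃ (C : ι → Matrix (Fin K) (Fin N) ℝ) (D : ι → Fin L → Fin M → Fin N → ℝ),
      IsSemibrick fun r => slice (D r) (C r) := by
  obtain ⟨S, hS⟩ := exists_isSemibrick ℝ ι hL hM hN
  refine ⟨fun _ => of fun k n => if Fin.castLE hK n = k then 1 else 0, fun r l m n => S r n l m,
    .of_comp (Fin.castLE hK) ?_⟩
  convert hS using 3 with r n
  ext l m
  simp [slice]

end Witnesses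

section FactorSpace

instance isAddHaarMeasure_volume_prod {X Y : Type*} [AddGroup X] [TopologicalSpace X]
    [MeasureSpace X] [AddGroup Y] [TopologicalSpace Y] [MeasureSpace Y] [MeasurableAdd X]
    [MeasurableAdd Y] [(volume : Measure X).IsAddHaarMeasure]
    [(volume : Measure Y).IsAddHaarMeasure] [SFinite (volume : Measure X)]
    [SFinite (volume : Measure Y)] : (volume : Measure (X × Y)).IsAddHaarMeasure :=
  Measure.prod.instIsAddHaarMeasure _ _

/-- The space of the factors `(A, B, C, D)` of an LMN decomposition with `R` terms, with matrices
written as functions so that it carries a norm. -/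
abbrev LMNFactors (R L M N I J K : ℕ) : Type :=
  (Fin R → Fin I → Fin L → ℝ) × (Fin R → Fin J → Fin M → ℝ) ×
    (Fin R → Fin K → Fin N → ℝ) × (Fin R → Fin L → Fin M → Fin N → ℝ)

variable {R L M N I J K : ℕ}

set_option synthInstance.maxSize 1000 in
instance borelSpace_LMNFactors : BorelSpace (LMNFactors R L M N I J K) := inferInstance

set_option synthInstance.maxSize 20000 in
instance isAddHaarMeasure_volume_LMNFactors :
    (volume : Measure (LMNFactors R L M N I J K)).IsAddHaarMeasure := inferInstance

theorem ae_isGeneric (hL : 0 < L) (hM : 0 < M) (hI : L * R ≤ I) (hJ : M * R ≤ J) (hK : N ≤ K)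
    (hNupper : N ≤ L * M) (hNlower : max (⌈(L : ℚ) / M⌉₊ + ⌈(M : ℚ) / L⌉₊) 3 ≤ N) :
    ∀ᵐ x : LMNFactors R L M N I J K, IsGeneric x.1 x.2.1 x.2.2.1 x.2.2.2 := by
  obtain ⟨A, hA⟩ := exists_concatCols_mulVec_injective hI
  obtain ⟨B, hB⟩ := exists_concatCols_mulVec_injective hJ
  obtain ⟨C, D, hCD⟩ := exists_isSemibrick_slice (ι := Fin R) hL hM hNlower hK
  obtain ⟨D', hD'⟩ := exists_unfold₃_transpose_mulVec_injective hNupper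
  have hleft := ae_mulVec_injective_of_contDiff_omega volume (x₀ := (A, 0, 0, 0))
    (A := fun x : LMNFactors R L M N I J K => concatCols x.1)
    (fun i p => by simp only [concatCols, of_apply]; fun_prop) hA
  have hright := ae_mulVec_injective_of_contDiff_omega volume (x₀ := (0, B, 0, 0))
    (A := fun x : LMNFactors R L M N I J K => concatCols x.2.1)
    (fun i p => by simp only [concatCols, of_apply]; fun_prop) hB
  have hfactor (r : Fin R) := ae_mulVec_injective_of_contDiff_omega volume
    (x₀ := (0, 0, fun _ => (1 : Matrix (Fin K) (Fin K) ℝ).submatrix id (Fin.castLE hK), 0))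
    (A := fun x : LMNFactors R L M N I J K => x.2.2.1 r)
    (fun i j => by fun_prop) (mulVec_injective_one_submatrix (Fin.castLE_injective hK))
  have hunfold (r : Fin R) := ae_mulVec_injective_of_contDiff_omega volume
    (x₀ := (0, 0, 0, fun _ => D'))
    (A := fun x : LMNFactors R L M N I J K => (unfold₃ (x.2.2.2 r))ᵀ)
    (fun p n => by simp only [unfold₃, transpose_apply, of_apply]; fun_prop) hD'
  have hbrick := ae_isSemibrick_of_contDiff_omega volume (x₀ := (0, 0, C, D))
    (S := fun x : LMNFactors R L M N I J K => fun r => slice (x.2.2.2 r) (x.2.2.1 r))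
    (fun r k l m => by simp only [slice, of_apply]; fun_prop) hCD
  filter_upwards [hleft, hright, ae_all_iff.2 hfactor, ae_all_iff.2 hunfold, hbrick]
    with x hleft hright hfactor hunfold hbrick
  exact ⟨hleft, hright, hfactor, hunfold, hbrick⟩

end FactorSpace

/-- **Theorem 1 (Identifiability of LMN).** Almost-sure essential uniqueness of the
block-term decomposition with multilinear rank-`(L,M,N)` terms. -/
theorem lmn_essential_uniqueness
    (R L M N I J K : ℕ)
    (hR : 0 < R) (hL : 0 < L) (hM : 0 < M) (hN0 : 0 < N)
    (hI0 : 0 < I) (hJ0 : 0 < J) (hK0 : 0 < K)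
    (hI : I ≥ L * R) (hJ : J ≥ M * R) (hK : K ≥ N)
    (hNupper : L * M ≥ N)
    (hNlower : N ≥ max (⌈(L : ℚ) / (M : ℚ)⌉₊ + ⌈(M : ℚ) / (L : ℚ)⌉₊) 3) :
    ∀ᵐ x : (Fin R → Matrix (Fin I) (Fin L) ℝ) × (Fin R → Matrix (Fin J) (Fin M) ℝ) ×
        (Fin R → Matrix (Fin K) (Fin N) ℝ) × (Fin R → (Fin L → Fin M → Fin N → ℝ))
        ∂volume,
      ∀ (A' : Fin R → Matrix (Fin I) (Fin L) ℝ) (B' : Fin R → Matrix (Fin J) (Fin M) ℝ)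
        (C' : Fin R → Matrix (Fin K) (Fin N) ℝ) (D' : Fin R → (Fin L → Fin M → Fin N → ℝ)),
        (∀ i j k, (∑ r, tucker (x.2.2.2 r) (x.1 r) (x.2.1 r) (x.2.2.1 r) i j k)
            = ∑ r, tucker (D' r) (A' r) (B' r) (C' r) i j k) →
        ∃ π : Equiv.Perm (Fin R), ∀ r : Fin R,
          ∃ (Θa : Matrix (Fin L) (Fin L) ℝ) (Θb : Matrix (Fin M) (Fin M) ℝ)
            (Θc : Matrix (Fin N) (Fin N) ℝ),
            IsUnit Θa ∧ IsUnit Θb ∧ IsUnit Θc ∧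
            A' (π r) = x.1 r * Θa ∧
            B' (π r) = x.2.1 r * Θb ∧
            C' (π r) = x.2.2.1 r * Θc ∧
            tucker (D' (π r)) Θa Θb Θc = x.2.2.2 r := by
  have : Nonempty (Fin L) := ⟨⟨0, hL⟩⟩
  have : Nonempty (Fin M) := ⟨⟨0, hM⟩⟩
  have hgeneric := ae_isGeneric hL hM hI hJ hK hNupper hNlower
  filter_upwards [hgeneric] with x hx A' B' C' D' hY
  exact hx.exists_perm hY
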